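/- For all i, j ∈ {1,…,n}, the positive Demazure module V^+_{w_0 s_i}(ϖ_j) equals V(ϖ_j) if i ≠ j, and equals the direct sum ⊕_{μ ∈ Ω(ϖ_j) \ {w_0ϖ_j}} V(ϖ_j)_μ of all weight spaces of V(ϖ_j) except the lowest one if i = j. -/

import Mathlib

open scoped TensorProduct

/-- The `q`-factorial `(q - q⁻¹)(q² - q⁻²)⋯(qᵐ - q⁻ᵐ)`. -/
noncomputable def qfac (t : ℂ) (m : ℕ) : ℂ :=
  ∏ j ∈ Finset.range m, (t ^ (j + 1) - t⁻¹ ^ (j + 1))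

/-- The `q`-binomial coefficient `[m k]` at parameter `t`. -/
noncomputable def qbinom (t : ℂ) (m k : ℕ) : ℂ :=
  qfac t m / (qfac t k * qfac t (m - k))

/-- The defining relations of the quantised enveloping algebra `U_q(𝔤)` associated to a
Cartan matrix `a` with symmetrising integers `d`, on elements `E i`, `F i`, `K i` of a
`ℂ`-algebra `B`: the `K i` are commuting units, conjugation by `K i` rescales `E j` and
`F j` by `q_i^{±a i j}` (where `q_i = q^{d i}`), the commutator `[E i, F j]` is
`δ_{ij} (K_i - K_i⁻¹)/(q_i - q_i⁻¹)`, and the quantum Serre relations hold. -/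
def UqRels (q : ℂ) {n : ℕ} (a : Fin n → Fin n → ℤ) (d : Fin n → ℕ)
    (B : Type) [Ring B] [Algebra ℂ B] (E F : Fin n → B) (K : Fin n → Bˣ) : Prop :=
  (∀ i j, (K i : B) * (K j : B) = (K j : B) * (K i : B)) ∧
  (∀ i j, (K i : B) * E j = (q ^ ((d i : ℤ) * a i j)) • (E j * (K i : B))) ∧
  (∀ i j, (K i : B) * F j = (q ^ (-((d i : ℤ) * a i j))) • (F j * (K i : B))) ∧
  (∀ i j, E i * F j - F j * E i =
    if i = j then (q ^ (d i : ℤ) - q ^ (-(d i : ℤ)))⁻¹ • ((K i : B) - (((K i)⁻¹ : Bˣ) : B))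
    else 0) ∧
  (∀ i j, i ≠ j → ∑ k ∈ Finset.range ((1 - a i j).toNat + 1),
      ((-1 : ℂ) ^ k * qbinom (q ^ (d i : ℤ)) ((1 - a i j).toNat) k) •
        (E i ^ ((1 - a i j).toNat - k) * E j * E i ^ k) = 0) ∧
  (∀ i j, i ≠ j → ∑ k ∈ Finset.range ((1 - a i j).toNat + 1),
      ((-1 : ℂ) ^ k * qbinom (q ^ (d i : ℤ)) ((1 - a i j).toNat) k) •
        (F i ^ ((1 - a i j).toNat - k) * F j * F i ^ k) = 0)

/-- The weight space of weight `μ = ∑ μ i ϖ i` in a `U_q(𝔤)`-module: the set of vectors on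
which each `K i` acts by the scalar `q^{(μ, α_i)} = q^{μ i * d i}`. -/
noncomputable def wtSp (q : ℂ) {n : ℕ} (d : Fin n → ℕ)
    {U : Type} [Ring U] [Algebra ℂ U] (K : Fin n → Uˣ)
    {Vc : Type} [AddCommGroup Vc] [Module ℂ Vc] (ρ : U →ₐ[ℂ] Module.End ℂ Vc)
    (μ : Fin n → ℤ) : Submodule ℂ Vc :=
  ⨅ i : Fin n, LinearMap.ker (ρ (K i : U) - (q ^ (μ i * (d i : ℤ))) • (1 : Module.End ℂ Vc))

/-- `ξ` is a dual vector of weight `μ`:  equivalently (via the antipode-twisted action on the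
dual module), `ξ` vanishes on every weight space of weight `ν ≠ -μ`. -/
noncomputable def inDualWt (q : ℂ) {n : ℕ} (d : Fin n → ℕ)
    {U : Type} [Ring U] [Algebra ℂ U] (K : Fin n → Uˣ)
    {Vc : Type} [AddCommGroup Vc] [Module ℂ Vc] (ρ : U →ₐ[ℂ] Module.End ℂ Vc)
    (μ : Fin n → ℤ) (ξ : Module.Dual ℂ Vc) : Prop :=
  ∀ ν : Fin n → ℤ, ν ≠ -μ → ∀ x ∈ wtSp q d K ρ ν, ξ x = 0

/-- The Demazure-type submodule generated by the weight space of weight `ν` under the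
subalgebra of `U` generated by `gens` (take `gens = Set.range E` for `V⁺_w(λ)` with
`ν = wλ`, and `gens = Set.range F` for `V⁻_w(λ)`). -/
noncomputable def demazure (q : ℂ) {n : ℕ} (d : Fin n → ℕ)
    {U : Type} [Ring U] [Algebra ℂ U] (gens : Set U) (K : Fin n → Uˣ)
    {Vc : Type} [AddCommGroup Vc] [Module ℂ Vc] (ρ : U →ₐ[ℂ] Module.End ℂ Vc)
    (ν : Fin n → ℤ) : Submodule ℂ Vc :=
  Submodule.span ℂ
    {x | ∃ y ∈ Algebra.adjoin ℂ gens, ∃ u ∈ wtSp q d K ρ ν, x = ρ y u}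

/-- A two-sided ideal of a (possibly noncommutative) ring is prime if it is proper and
`x R y ⊆ P` implies `x ∈ P` or `y ∈ P`. -/
def IsPrimeTwoSided {R : Type*} [Ring R] (P : TwoSidedIdeal R) : Prop :=
  P ≠ ⊤ ∧ ∀ x y : R, (∀ r : R, x * r * y ∈ P) → x ∈ P ∨ y ∈ P

/-- An element `r` of a ring is normal if `rR = Rr`. -/
def IsNormalElem {R : Type*} [Ring R] (r : R) : Prop :=
  (∀ x, ∃ y, r * x = y * r) ∧ ∀ x, ∃ y, x * r = r * y

/-- The ideal `Q⁺_{w}` of `O_q(G)`: generated by the coordinate functions `c^{ϖ_j}_{ξ,v}` with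
`v` a highest weight vector of `V(ϖ_j)` and `ξ` orthogonal to the Demazure module
`V⁺_w(ϖ_j)`. -/
noncomputable def Qplus (q : ℂ) {n : ℕ} (d : Fin n → ℕ)
    {U : Type} [Ring U] [Algebra ℂ U] (E : Fin n → U) (K : Fin n → Uˣ)
    {V : (Fin n → ℕ) → Type} [∀ c, AddCommGroup (V c)] [∀ c, Module ℂ (V c)]
    (ρ : ∀ c, U →ₐ[ℂ] Module.End ℂ (V c))
    {W : Type} [Group W] (σ : W →* Multiplicative (AddAut (Fin n → ℤ)))
    {A : Type} [Ring A]
    (cf : ∀ c : Fin n → ℕ, Module.Dual ℂ (V c) → V c → A)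
    (w : W) : TwoSidedIdeal A :=
  TwoSidedIdeal.span
    {x | ∃ j : Fin n, ∃ ξ : Module.Dual ℂ (V (Pi.single j 1)),
      ∃ v ∈ wtSp q d K (ρ (Pi.single j 1)) (fun k => ((Pi.single j 1 : Fin n → ℕ) k : ℤ)),
        (∀ y ∈ demazure q d (Set.range E) K (ρ (Pi.single j 1))
            (σ w (fun k => ((Pi.single j 1 : Fin n → ℕ) k : ℤ))), ξ y = 0) ∧
        x = cf (Pi.single j 1) ξ v}

/-- The ideal `Q⁻_{w}` of `O_q(G)`: generated by the coordinate functions `c^{ϖ_j}_{ξ,v}` with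
`v` a lowest weight vector of `V(ϖ_j)` and `ξ` orthogonal to the Demazure module
`V⁻_{w w₀}(ϖ_j)`. -/
noncomputable def Qminus (q : ℂ) {n : ℕ} (d : Fin n → ℕ)
    {U : Type} [Ring U] [Algebra ℂ U] (F : Fin n → U) (K : Fin n → Uˣ)
    {V : (Fin n → ℕ) → Type} [∀ c, AddCommGroup (V c)] [∀ c, Module ℂ (V c)]
    (ρ : ∀ c, U →ₐ[ℂ] Module.End ℂ (V c))
    {W : Type} [Group W] (σ : W →* Multiplicative (AddAut (Fin n → ℤ))) (w₀ : W)
    {A : Type} [Ring A]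
    (cf : ∀ c : Fin n → ℕ, Module.Dual ℂ (V c) → V c → A)
    (w : W) : TwoSidedIdeal A :=
  TwoSidedIdeal.span
    {x | ∃ j : Fin n, ∃ ξ : Module.Dual ℂ (V (Pi.single j 1)),
      ∃ v ∈ wtSp q d K (ρ (Pi.single j 1)) (σ w₀ (fun k => ((Pi.single j 1 : Fin n → ℕ) k : ℤ))),
        (∀ y ∈ demazure q d (Set.range F) K (ρ (Pi.single j 1))
            (σ (w * w₀) (fun k => ((Pi.single j 1 : Fin n → ℕ) k : ℤ))), ξ y = 0) ∧
        x = cf (Pi.single j 1) ξ v}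

/-!
Averaging the standard form over `W` gives a `W`-invariant positive definite form `(·, ·)` on the
weight lattice. In a simple finite-dimensional module of highest weight `λ` every weight `μ`
satisfies `(μ, μ) ≤ (λ, λ)`. Now let `v ≠ 0` have weight `w₀λ`. Each `F_l` kills `v`, since
`w₀λ - α_l` is too long to be a weight; likewise `E_l` kills `v` when `w₀λ` is orthogonal to `α_l`.
By the commutation relations the span of the `U_q^+`-orbit of a vector killed by all `F_l` is a
submodule, so `U_q^+ v = V(λ)`.

Let `λ = ϖ_j`. If `i ≠ j`, then `s_i` fixes `ϖ_j` and the Demazure module is `U_q^+ v`. If `i = j`,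
write `w₀α_i = -α_l`. Then `E_l` is the only generator that may not kill `v`, and `u` spans the
weight space of weight `w₀ϖ_i + α_l`, which contains `E_l v`. So `U_q^+ u` and `v` together span
`V(ϖ_i)`, whereas all weights of `U_q^+ u` are strictly higher than `w₀ϖ_i`.
-/

/-- Simple roots in the coordinates given by the fundamental weights: the `i`-th coordinate of `α_k`
is the Cartan integer `a i k`, the pairing of `α_k` with the `i`-th simple coroot. -/
def simpleRoot {ι : Type*} (a : ι → ι → ℤ) (k : ι) : ι → ℤ := fun i => a i k

theorem simpleRoot_ne_zero {ι : Type*} {a : ι → ι → ℤ} {k : ι} (ha : a k k = 2) :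
    simpleRoot a k ≠ 0 := fun h => two_ne_zero (ha.symm.trans (congrFun h k))

/-- A positive definite symmetric form on the weight lattice, normalised on each simple root as a
Weyl-invariant form is: `2 (ν, α_k) / (α_k, α_k)` is the `k`-th coordinate of `ν`. -/
structure IsRootForm {ι : Type*} (a : ι → ι → ℤ) (B : LinearMap.BilinForm ℤ (ι → ℤ)) : Prop where
  symm : ∀ μ ν, B μ ν = B ν μ
  pos : ∀ ν, ν ≠ 0 → 0 < B ν ν
  two_mul_apply_simpleRoot : ∀ ν k,
    2 * B ν (simpleRoot a k) = ν k * B (simpleRoot a k) (simpleRoot a k)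

namespace IsRootForm

variable {ι : Type*} {a : ι → ι → ℤ} {B : LinearMap.BilinForm ℤ (ι → ℤ)} {k : ι}

theorem simpleRoot_self_pos (hB : IsRootForm a B) (ha : a k k = 2) :
    0 < B (simpleRoot a k) (simpleRoot a k) :=
  hB.pos _ (simpleRoot_ne_zero ha)

theorem apply_simpleRoot_nonneg (hB : IsRootForm a B) (ha : a k k = 2) {ν : ι → ℤ}
    (hν : 0 ≤ ν k) : 0 ≤ B ν (simpleRoot a k) := by
  have := hB.two_mul_apply_simpleRoot ν k
  have := mul_nonneg hν (hB.simpleRoot_self_pos ha).le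
  linarith

theorem apply_simpleRoot_pos (hB : IsRootForm a B) (ha : a k k = 2) {ν : ι → ℤ}
    (hν : 0 < ν k) : 0 < B ν (simpleRoot a k) := by
  have := hB.two_mul_apply_simpleRoot ν k
  have := mul_pos hν (hB.simpleRoot_self_pos ha)
  linarith

theorem apply_self_lt_add_simpleRoot (hB : IsRootForm a B) (ha : a k k = 2) {ν : ι → ℤ}
    (hν : 0 ≤ ν k) : B ν ν < B (ν + simpleRoot a k) (ν + simpleRoot a k) := by
  have := hB.apply_simpleRoot_nonneg ha hν
  have := hB.simpleRoot_self_pos ha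
  have := hB.symm ν (simpleRoot a k)
  simp only [map_add, LinearMap.add_apply]
  linarith

theorem apply_self_lt_sub_simpleRoot (hB : IsRootForm a B) (ha : a k k = 2) {ν : ι → ℤ}
    (hν : ν k ≤ 0) : B ν ν < B (ν - simpleRoot a k) (ν - simpleRoot a k) := by
  have := hB.apply_self_lt_add_simpleRoot ha (ν := -ν) (by simpa using hν)
  rw [neg_add_eq_sub, ← neg_sub] at this
  simpa only [map_neg, LinearMap.neg_apply, neg_neg] using this

theorem apply_self_reflection (hB : IsRootForm a B) (ν : ι → ℤ) (k : ι) :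
    B (ν - ν k • simpleRoot a k) (ν - ν k • simpleRoot a k) = B ν ν := by
  have hroot := hB.two_mul_apply_simpleRoot ν k
  have hsymm := hB.symm ν (simpleRoot a k)
  simp only [map_sub, map_smul, LinearMap.sub_apply, LinearMap.smul_apply, smul_eq_mul]
  linear_combination (-ν k) * hroot + ν k * hsymm

theorem of_reflection_invariant (ha : ∀ i, a i i = 2) (hsymm : ∀ μ ν, B μ ν = B ν μ)
    (hpos : ∀ ν, ν ≠ 0 → 0 < B ν ν)
    (hrefl : ∀ k μ ν, B (μ - μ k • simpleRoot a k) (ν - ν k • simpleRoot a k) = B μ ν) :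
    IsRootForm a B := by
  refine ⟨hsymm, hpos, fun ν k => ?_⟩
  have h := hrefl k ν (simpleRoot a k)
  rw [show simpleRoot a k k = 2 from ha k] at h
  simp only [map_sub, map_smul, LinearMap.sub_apply, LinearMap.smul_apply, smul_eq_mul] at h
  linarith

theorem map_simpleRoot (hB : IsRootForm a B) (ha : ∀ i, a i i = 2) {g : (ι → ℤ) ≃ₗ[ℤ] (ι → ℤ)}
    (hinv : ∀ μ ν, B (g μ) (g ν) = B μ ν) {π : ι → ι} (hπ : ∀ ν i, g ν (π i) = -ν i) (j : ι) :
    g (simpleRoot a j) = -simpleRoot a (π j) := by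
  rw [← add_eq_zero_iff_eq_neg]
  by_contra hne
  set ξ := g (simpleRoot a j) + simpleRoot a (π j) with hξ
  have hcoord : ξ (π j) = 0 := by
    simp [hξ, hπ, simpleRoot, ha]
  have hcoord' : g.symm ξ j = 0 := by
    rw [← neg_eq_zero, ← hπ, g.apply_symm_apply, hcoord]
  have horth : B ξ (simpleRoot a (π j)) = 0 := by
    simpa [hcoord] using hB.two_mul_apply_simpleRoot ξ (π j)
  have horth' : B ξ (g (simpleRoot a j)) = 0 := by
    rw [← g.apply_symm_apply ξ, hinv]
    simpa [hcoord'] using hB.two_mul_apply_simpleRoot (g.symm ξ) j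
  have hpos := hB.pos ξ hne
  nth_rewrite 2 [hξ] at hpos
  rw [map_add, horth, horth', add_zero] at hpos
  exact hpos.false

end IsRootForm

section WeylGroup

variable {ι : Type*} [Finite ι] {W : Type*} [Group W] [Finite W]

theorem exists_posDef_invariant_bilinForm (r : W →* ((ι → ℤ) ≃ₗ[ℤ] (ι → ℤ))) :
    ∃ B : LinearMap.BilinForm ℤ (ι → ℤ), (∀ μ ν, B μ ν = B ν μ) ∧ (∀ ν, ν ≠ 0 → 0 < B ν ν) ∧
      ∀ w μ ν, B (r w μ) (r w ν) = B μ ν := by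
  have := Fintype.ofFinite W
  have := Fintype.ofFinite ι
  let B : LinearMap.BilinForm ℤ (ι → ℤ) :=
    ∑ w : W, (dotProductBilin ℤ ℤ).compl₁₂ (r w).toLinearMap (r w).toLinearMap
  have B_apply : ∀ μ ν, B μ ν = ∑ w : W, r w μ ⬝ᵥ r w ν := fun μ ν => by
    simp [B, LinearMap.sum_apply]
  refine ⟨B, fun μ ν => ?_, fun ν hν => ?_, fun w μ ν => ?_⟩
  · simp only [B_apply, dotProduct_comm]
  · rw [B_apply]
    refine Finset.sum_pos (fun w _ => ?_) Finset.univ_nonempty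
    simpa using Matrix.dotProduct_star_self_pos_iff.2 ((r w).map_ne_zero_iff.2 hν)
  · simp only [B_apply, ← LinearEquiv.mul_apply, ← map_mul]
    exact Fintype.sum_equiv (Equiv.mulRight w) _ _ fun _ => rfl

theorem exists_isRootForm_invariant {a : ι → ι → ℤ} (ha : ∀ i, a i i = 2)
    (r : W →* ((ι → ℤ) ≃ₗ[ℤ] (ι → ℤ))) (s : ι → W)
    (hs : ∀ i μ, r (s i) μ = μ - μ i • simpleRoot a i) :
    ∃ B, IsRootForm a B ∧ ∀ w μ ν, B (r w μ) (r w ν) = B μ ν := by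
  obtain ⟨B, hsymm, hpos, hinv⟩ := exists_posDef_invariant_bilinForm r
  refine ⟨B, .of_reflection_invariant ha hsymm hpos fun k μ ν => ?_, hinv⟩
  rw [← hs, ← hs, hinv]

end WeylGroup

section LongestElement

theorem antitone_inv_of_isOfFinOrder {R P : Type*} [Semiring R] [AddCommMonoid P] [Module R P]
    [Preorder P] {g : P ≃ₗ[R] P} (hg : IsOfFinOrder g) (hanti : Antitone g) :
    Antitone ⇑g⁻¹ := by
  obtain ⟨m, hm, hgm⟩ := isOfFinOrder_iff_pow_eq_one.1 hg
  have hinv : g⁻¹ = (g * g) ^ (m - 1) * g := by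
    rw [← pow_two, ← pow_mul, ← pow_succ, inv_eq_iff_mul_eq_one, ← pow_succ',
      show 2 * (m - 1) + 1 + 1 = m * 2 by lia, pow_mul, hgm, one_pow]
  have hmono : ∀ k : ℕ, Monotone ⇑((g * g) ^ k) := fun k => by
    induction k with
    | zero => exact monotone_id
    | succ k ih => exact ih.comp (hanti.comp hanti)
  rw [hinv]
  exact (hmono _).comp_antitone hanti

variable {ι : Type*}

theorem zero_covBy_iff_eq_single [DecidableEq ι] {ν : ι → ℤ} : 0 ⋖ ν ↔ ∃ i, ν = Pi.single i 1 := by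
  simp [Pi.covBy_iff, Order.covBy_iff_add_one_eq, Pi.single, Function.eq_update_iff, eq_comm]

/-- Negation turns `g` into an automorphism of the ordered lattice `ι → ℤ`, which permutes the
elements covering `0`. -/
theorem exists_perm_apply_eq_neg [Finite ι] {g : (ι → ℤ) ≃ₗ[ℤ] (ι → ℤ)} (hg : IsOfFinOrder g)
    (hdom : ∀ ν, 0 ≤ ν → g ν ≤ 0) : ∃ π : Equiv.Perm ι, ∀ ν i, g ν (π i) = -ν i := by
  classical
  have hanti : Antitone g := (antitone_iff_map_nonpos g).2 hdom
  have hanti_symm : Antitone g.symm := antitone_inv_of_isOfFinOrder hg hanti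
  let φ : (ι → ℤ) ≃o (ι → ℤ) :=
    { toEquiv := (g.trans (LinearEquiv.neg ℤ)).toEquiv
      map_rel_iff' := fun {μ ν} => by
        refine neg_le_neg_iff.trans ⟨fun h => ?_, fun h => hanti h⟩
        simpa using hanti_symm h }
  have hφ : ∀ ν, φ ν = -g ν := fun ν => rfl
  have hsingle : ∀ i, ∃ k, g (Pi.single i 1) = -Pi.single k 1 := fun i => by
    have h : φ 0 ⋖ φ (Pi.single i 1) :=
      (apply_covBy_apply_iff φ).2 (zero_covBy_iff_eq_single.2 ⟨i, rfl⟩)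
    rw [hφ, map_zero, neg_zero, zero_covBy_iff_eq_single] at h
    obtain ⟨k, hk⟩ := h
    exact ⟨k, neg_eq_iff_eq_neg.1 hk⟩
  choose π hπ using hsingle
  have hinj : Function.Injective π := fun i j hij => by
    have : g (Pi.single i 1) = g (Pi.single j 1) := by rw [hπ, hπ, hij]
    by_contra hne
    simpa [hne] using congrFun (g.injective this) i
  refine ⟨.ofBijective π (Finite.injective_iff_bijective.1 hinj), fun ν i => ?_⟩
  have : LinearMap.proj (π i) ∘ₗ g.toLinearMap = -LinearMap.proj i := by
    have := Fintype.ofFinite ι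
    refine LinearMap.pi_ext' fun j => LinearMap.ext_ring ?_
    simp [hπ, Pi.single_apply, hinj.eq_iff]
  exact LinearMap.congr_fun this ν

end LongestElement

section StableSpan

variable {R A V κ M : Type*} [CommRing R] [Ring A] [Algebra R A] [AddCommGroup V] [Module R V]

/-- The smallest subspace that contains `v` and is stable under all the operators `T k`. For the
operators `E_i` and a vector `v` of weight `wλ` it is the Demazure module `V⁺_w(λ)`. -/
def stableSpan (T : κ → Module.End R V) (v : V) : Submodule R V :=
  sInf {N | v ∈ N ∧ ∀ k, N ≤ N.comap (T k)}

variable {T S : κ → Module.End R V} {v : V}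

theorem self_mem_stableSpan : v ∈ stableSpan T v :=
  Submodule.mem_sInf.2 fun _ hN => hN.1

theorem stableSpan_le {N : Submodule R V} (hv : v ∈ N) (hN : ∀ k, N ≤ N.comap (T k)) :
    stableSpan T v ≤ N :=
  sInf_le ⟨hv, hN⟩

theorem stableSpan_le_comap (k : κ) : stableSpan T v ≤ (stableSpan T v).comap (T k) :=
  fun _ hx => Submodule.mem_sInf.2 fun N hN => hN.2 k (Submodule.mem_sInf.1 hx N hN)

/-- The elements of an algebra whose action preserves a given subspace. -/
def stabilizerSubalgebra (ρ : A →ₐ[R] Module.End R V) (N : Submodule R V) : Subalgebra R A where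
  carrier := {y | N ≤ N.comap (ρ y)}
  mul_mem' hx hy v hv := by
    simpa using hx (hy hv)
  add_mem' hx hy v hv := by
    simpa using N.add_mem (hx hv) (hy hv)
  algebraMap_mem' r v hv := by
    simpa using N.smul_mem r hv

theorem span_adjoin_range_eq_stableSpan (ρ : A →ₐ[R] Module.End R V) (E : κ → A) (v : V) :
    Submodule.span R {x | ∃ y ∈ Algebra.adjoin R (Set.range E), x = ρ y v} =
      stableSpan (fun k => ρ (E k)) v := by
  refine le_antisymm (Submodule.span_le.2 ?_) (stableSpan_le ?_ fun k => Submodule.span_le.2 ?_)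
  · rintro _ ⟨y, hy, rfl⟩
    have hE : Set.range E ⊆ stabilizerSubalgebra ρ (stableSpan (fun k => ρ (E k)) v) :=
      Set.range_subset_iff.2 stableSpan_le_comap
    exact Algebra.adjoin_le hE hy self_mem_stableSpan
  · exact Submodule.subset_span ⟨1, one_mem _, by simp⟩
  · rintro _ ⟨y, hy, rfl⟩
    exact Submodule.subset_span
      ⟨E k * y, mul_mem (Algebra.subset_adjoin ⟨k, rfl⟩) hy, by simp⟩

variable {Wt : M → Submodule R V} {shift : κ → M → M}

theorem stableSpan_le_biSup (hT : ∀ k μ, Wt μ ≤ (Wt (shift k μ)).comap (T k)) {s : Set M}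
    (hs : ∀ μ ∈ s, ∀ k, shift k μ ∈ s) {ν : M} (hν : ν ∈ s) (hv : v ∈ Wt ν) :
    stableSpan T v ≤ ⨆ μ ∈ s, Wt μ :=
  stableSpan_le (le_biSup Wt hν hv) fun k => iSup₂_le fun μ hμ =>
    (hT k μ).trans (Submodule.comap_mono (le_biSup Wt (hs μ hμ k)))

theorem stableSpan_graded_and_stable (hT : ∀ k μ, Wt μ ≤ (Wt (shift k μ)).comap (T k))
    (hcomm : ∀ k l μ, ∀ x ∈ Wt μ, S l (T k x) - T k (S l x) ∈ Submodule.span R {x})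
    {ν : M} (hv : v ∈ Wt ν) (hS : ∀ l, S l v = 0) :
    stableSpan T v ≤ ⨆ μ, stableSpan T v ⊓ Wt μ ∧
      ∀ l, stableSpan T v ≤ (stableSpan T v).comap (S l) := by
  set P := stableSpan T v with hP
  let N : Submodule R V := ⨆ μ, P ⊓ Wt μ ⊓ ⨅ l, P.comap (S l)
  have hPN : P ≤ N := by
    refine stableSpan_le (le_iSup (fun μ => P ⊓ Wt μ ⊓ ⨅ l, P.comap (S l)) ν ?_) fun k =>
      iSup_le fun μ x hx => le_iSup (fun μ => P ⊓ Wt μ ⊓ ⨅ l, P.comap (S l)) (shift k μ) ?_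
    · simp [hP, self_mem_stableSpan, hv, hS]
    · simp only [Submodule.mem_inf, Submodule.mem_iInf, Submodule.mem_comap] at hx ⊢
      obtain ⟨⟨hxP, hxμ⟩, hxS⟩ := hx
      refine ⟨⟨stableSpan_le_comap k hxP, hT k μ hxμ⟩, fun l => ?_⟩
      have hspan : Submodule.span R {x} ≤ P := (Submodule.span_singleton_le_iff_mem x P).2 hxP
      exact (Submodule.sub_mem_iff_left P (stableSpan_le_comap k (hxS l))).1
        (hspan (hcomm k l μ x hxμ))
  exact ⟨hPN.trans (iSup_mono fun μ => inf_le_left),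
    fun l => hPN.trans (iSup_le fun μ => inf_le_right.trans (iInf_le _ l))⟩

end StableSpan

section QuantumInteger

variable {𝕜 : Type*} [Field 𝕜]

/-- The quantum integer `[m]_t`; at `t ^ 2 = 1` the division by `0` makes it `0`. -/
def qInt (t : 𝕜) (m : ℤ) : 𝕜 := (t ^ m - t ^ (-m)) / (t - t⁻¹)

variable {t : 𝕜}

theorem qInt_ne_zero (ht : Function.Injective fun m : ℤ => t ^ m) {m : ℤ} (hm : m ≠ 0) :
    qInt t m ≠ 0 := by
  have hne : ∀ k : ℤ, k ≠ 0 → t ^ k - t ^ (-k) ≠ 0 := fun k hk h =>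
    hk (self_eq_neg.1 (ht (sub_eq_zero.1 h)))
  exact div_ne_zero (hne m hm) (by simpa using hne 1 one_ne_zero)

theorem qInt_add_one_mul (ht : t ≠ 0) (m k : ℤ) :
    qInt t (m + 1) * qInt t k = qInt t m * qInt t (k + 1) - qInt t (m - k) := by
  simp only [qInt]
  field_simp
  simp only [zpow_add₀ ht, zpow_sub₀ ht, zpow_neg, zpow_one, neg_sub, neg_add]
  field_simp
  ring

theorem ne_zero_of_zpow_injective (ht : Function.Injective fun m : ℤ => t ^ m) : t ≠ 0 := by
  rintro rfl
  exact absurd (ht (a₁ := 1) (a₂ := 2) (by simp)) (by norm_num)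

theorem zpow_injective_of_not_isOfFinOrder (ht0 : t ≠ 0) (ht : ¬ IsOfFinOrder t) :
    Function.Injective fun m : ℤ => t ^ m := by
  have hunit : ¬ IsOfFinOrder (Units.mk0 t ht0) := by
    rwa [← Units.isOfFinOrder_val]
  exact fun m k h => injective_zpow_iff_not_isOfFinOrder.2 hunit (Units.ext (by simpa using h))

end QuantumInteger

/-- A module over the quantised enveloping algebra with Cartan matrix `a` and `q_i = t i`, seen
through the operators `e i`, `f i` of its generators and through the family `Wt` of its weight
spaces. Simplicity is required for the graded submodules, those spanned by their weight vectors. -/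
structure IsSimpleWeightModule {ι 𝕜 V : Type*} [Field 𝕜] [AddCommGroup V] [Module 𝕜 V]
    (a : ι → ι → ℤ) (t : ι → 𝕜) (e f : ι → Module.End 𝕜 V) (Wt : (ι → ℤ) → Submodule 𝕜 V) :
    Prop where
  zpow_injective : ∀ k, Function.Injective fun m : ℤ => t k ^ m
  indep : iSupIndep Wt
  raise_mem : ∀ k μ, Wt μ ≤ (Wt (μ + simpleRoot a k)).comap (e k)
  lower_mem : ∀ k μ, Wt μ ≤ (Wt (μ - simpleRoot a k)).comap (f k)
  commutator_self : ∀ k μ, ∀ x ∈ Wt μ, e k (f k x) - f k (e k x) = qInt (t k) (μ k) • x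
  commute_of_ne : ∀ k l, k ≠ l → Commute (e k) (f l)
  eq_bot_or_eq_top : ∀ N : Submodule 𝕜 V, (∀ k, N ≤ N.comap (e k)) → (∀ k, N ≤ N.comap (f k)) →
    N ≤ ⨆ μ, N ⊓ Wt μ → N = ⊥ ∨ N = ⊤

namespace IsSimpleWeightModule

variable {ι 𝕜 V : Type*} [Field 𝕜] [AddCommGroup V] [Module 𝕜 V] {a : ι → ι → ℤ} {t : ι → 𝕜}
  {e f : ι → Module.End 𝕜 V} {Wt : (ι → ℤ) → Submodule 𝕜 V} {lam μ ν : ι → ℤ} {k : ι} {v x : V}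

theorem commutator_mem_span (h : IsSimpleWeightModule a t e f Wt) (k l : ι) (hx : x ∈ Wt μ) :
    e k (f l x) - f l (e k x) ∈ Submodule.span 𝕜 {x} := by
  rcases eq_or_ne k l with rfl | hkl
  · rw [h.commutator_self k μ x hx]
    exact Submodule.smul_mem _ _ (Submodule.mem_span_singleton_self x)
  · have hzero : e k (f l x) - f l (e k x) = 0 :=
      sub_eq_zero.2 (LinearMap.congr_fun (h.commute_of_ne k l hkl).eq x)
    exact hzero ▸ zero_mem _

theorem stableSpan_lower_eq_top (h : IsSimpleWeightModule a t e f Wt) (hv : v ∈ Wt ν) (hv0 : v ≠ 0)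
    (he : ∀ k, e k v = 0) : stableSpan f v = ⊤ := by
  obtain ⟨hgraded, hstable⟩ := stableSpan_graded_and_stable h.lower_mem
    (fun k l μ x hx => h.commutator_mem_span l k hx) hv he
  refine (h.eq_bot_or_eq_top _ hstable stableSpan_le_comap hgraded).resolve_left ?_
  exact (Submodule.ne_bot_iff _).2 ⟨v, self_mem_stableSpan, hv0⟩

theorem stableSpan_raise_eq_top (h : IsSimpleWeightModule a t e f Wt) (hv : v ∈ Wt ν) (hv0 : v ≠ 0)
    (hf : ∀ k, f k v = 0) : stableSpan e v = ⊤ := by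
  obtain ⟨hgraded, hstable⟩ := stableSpan_graded_and_stable h.raise_mem
    (fun k l μ x hx => neg_sub (e k (f l x)) _ ▸ neg_mem (h.commutator_mem_span k l hx)) hv hf
  refine (h.eq_bot_or_eq_top _ stableSpan_le_comap hstable hgraded).resolve_left ?_
  exact (Submodule.ne_bot_iff _).2 ⟨v, self_mem_stableSpan, hv0⟩

theorem raise_pow_mem (h : IsSimpleWeightModule a t e f Wt) (hx : x ∈ Wt ν) (k : ι) (r : ℕ) :
    (e k ^ r) x ∈ Wt (ν + r • simpleRoot a k) := by
  induction r with
  | zero => simpa using hx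
  | succ r ih =>
    rw [pow_succ', succ_nsmul, ← add_assoc]
    exact h.raise_mem k _ ih

theorem lower_raise_pow_succ (h : IsSimpleWeightModule a t e f Wt) (ha : a k k = 2)
    (hx : x ∈ Wt ν) (hfx : f k x = 0) (r : ℕ) :
    f k ((e k ^ (r + 1)) x) = (qInt (t k) (r + 1) * qInt (t k) (-ν k - r)) • (e k ^ r) x := by
  have hqInt := qInt_add_one_mul (ne_zero_of_zpow_injective (h.zpow_injective k))
  have hstep : ∀ r : ℕ, f k ((e k ^ (r + 1)) x) =
      e k (f k ((e k ^ r) x)) - qInt (t k) (r - (-ν k - r)) • (e k ^ r) x := fun r => by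
    have hweight : (ν + r • simpleRoot a k) k = r - (-ν k - r) := by
      rw [Pi.add_apply, Pi.smul_apply, nsmul_eq_mul, simpleRoot, ha]
      ring
    rw [← hweight, ← h.commutator_self k _ _ (h.raise_pow_mem hx k r), pow_succ',
      Module.End.mul_apply, sub_sub_cancel]
  induction r with
  | zero =>
    rw [hstep, hqInt]
    simp [hfx, qInt]
  | succ r ih =>
    rw [hstep, ih, map_smul, ← Module.End.mul_apply, ← pow_succ', ← sub_smul, Nat.cast_succ,
      hqInt (r + 1), sub_add_eq_sub_sub, sub_add_cancel]

theorem raise_pow_ne_zero (h : IsSimpleWeightModule a t e f Wt) (ha : a k k = 2) (hx : x ∈ Wt ν)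
    (hx0 : x ≠ 0) (hfx : f k x = 0) {r : ℕ} (hr : r ≤ -ν k) : (e k ^ r) x ≠ 0 := by
  induction r with
  | zero => simpa using hx0
  | succ r ih =>
    intro hzero
    have hstring := h.lower_raise_pow_succ ha hx hfx r
    rw [hzero, map_zero, eq_comm] at hstring
    have hinj := h.zpow_injective k
    refine smul_ne_zero (mul_ne_zero (qInt_ne_zero hinj ?_) (qInt_ne_zero hinj ?_))
      (ih ?_) hstring <;> lia

theorem reflection_weight_ne_bot (h : IsSimpleWeightModule a t e f Wt) (ha : a k k = 2)
    (hν : Wt ν ≠ ⊥) (hνk : ν k ≤ 0) (hsub : Wt (ν - simpleRoot a k) = ⊥) :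
    Wt (ν - ν k • simpleRoot a k) ≠ ⊥ := by
  obtain ⟨x, hx, hx0⟩ := (Submodule.ne_bot_iff _).1 hν
  have hfx : f k x = 0 := by simpa [hsub] using h.lower_mem k ν hx
  obtain ⟨m, hm⟩ := Int.eq_ofNat_of_zero_le (neg_nonneg.2 hνk)
  refine (Submodule.ne_bot_iff _).2
    ⟨(e k ^ m) x, ?_, h.raise_pow_ne_zero ha hx hx0 hfx hm.ge⟩
  have := h.raise_pow_mem hx k m
  rwa [← natCast_zsmul, ← hm, neg_smul, ← sub_eq_add_neg] at this

theorem mem_of_biSup_eq_top (h : IsSimpleWeightModule a t e f Wt) {s : Set (ι → ℤ)}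
    (hs : ⨆ μ ∈ s, Wt μ = ⊤) (hμ : Wt μ ≠ ⊥) : μ ∈ s := by
  by_contra hμs
  exact hμ (disjoint_top.1 (hs ▸ h.indep.disjoint_biSup hμs))

variable {B : LinearMap.BilinForm ℤ (ι → ℤ)} {δ : ι → ℤ}

theorem apply_le_of_weight (h : IsSimpleWeightModule a t e f Wt) (ha : ∀ i, a i i = 2)
    (hB : IsRootForm a B) (hv : v ∈ Wt lam) (hv0 : v ≠ 0) (he : ∀ k, e k v = 0) (hδ : 0 ≤ δ)
    (hμ : Wt μ ≠ ⊥) : B δ μ ≤ B δ lam := by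
  refine h.mem_of_biSup_eq_top (s := {μ | B δ μ ≤ B δ lam}) (top_unique ?_) hμ
  rw [← h.stableSpan_lower_eq_top hv hv0 he]
  refine stableSpan_le_biSup h.lower_mem (fun μ hμ k => ?_) (le_refl (B δ lam)) hv
  simp only [Set.mem_ofPred_eq, map_sub] at hμ ⊢
  linarith [hB.apply_simpleRoot_nonneg (ha k) (hδ k)]

/-- Among the weights of maximal norm, one of maximal height is dominant: if `δ k < 0` then
`δ - α_k` is too long to be a weight, so `f k` kills a vector of weight `δ`, and the `e k`-string
through it reaches the reflected weight, which is as long as `δ` but higher. -/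
theorem exists_dominant_weight_maximal_norm [FiniteDimensional 𝕜 V]
    (h : IsSimpleWeightModule a t e f Wt) (ha : ∀ i, a i i = 2) (hB : IsRootForm a B)
    (hμ : Wt μ ≠ ⊥) :
    ∃ δ, Wt δ ≠ ⊥ ∧ 0 ≤ δ ∧ ∀ ν, Wt ν ≠ ⊥ → B ν ν ≤ B δ δ := by
  obtain ⟨δ, hδ, hmax⟩ := Set.exists_max_image {μ | Wt μ ≠ ⊥} (fun μ => toLex (B μ μ, B 1 μ))
    (WellFoundedGT.finite_ne_bot_of_iSupIndep h.indep) ⟨μ, hμ⟩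
  have hnorm : ∀ ν, Wt ν ≠ ⊥ → B ν ν ≤ B δ δ := fun ν hν =>
    (Prod.Lex.toLex_le_toLex'.1 (hmax ν hν)).1
  refine ⟨δ, hδ, fun k => ?_, hnorm⟩
  by_contra! hk
  replace hk : δ k < 0 := hk
  have hsub : Wt (δ - simpleRoot a k) = ⊥ := by
    by_contra hne
    exact (hnorm _ hne).not_gt (hB.apply_self_lt_sub_simpleRoot (ha k) hk.le)
  have hle := hmax _ (h.reflection_weight_ne_bot (ha k) hδ hk.le hsub)
  have hheight := (Prod.Lex.toLex_le_toLex'.1 hle).2 (hB.apply_self_reflection δ k)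
  have hpos : 0 < B 1 (simpleRoot a k) := hB.apply_simpleRoot_pos (ha k) one_pos
  simp only [map_sub, map_smul, smul_eq_mul] at hheight
  nlinarith

/-- A dominant weight `δ` of maximal norm satisfies `(δ, δ) ≤ (δ, λ)` and `(λ, λ) ≤ (δ, δ)`, so
that `(λ - δ, λ - δ) ≤ 0`. -/
theorem apply_self_le_of_weight [FiniteDimensional 𝕜 V] (h : IsSimpleWeightModule a t e f Wt)
    (ha : ∀ i, a i i = 2) (hB : IsRootForm a B) (hv : v ∈ Wt lam) (hv0 : v ≠ 0)
    (he : ∀ k, e k v = 0) (hμ : Wt μ ≠ ⊥) : B μ μ ≤ B lam lam := by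
  have hlam : Wt lam ≠ ⊥ := (Submodule.ne_bot_iff _).2 ⟨v, hv, hv0⟩
  obtain ⟨δ, hδ, hdom, hmax⟩ := h.exists_dominant_weight_maximal_norm ha hB hlam
  have hδlam : lam - δ = 0 := by
    by_contra hne
    have hpos := hB.pos _ hne
    have hle := h.apply_le_of_weight ha hB hv hv0 he hdom hδ
    have hlam_le := hmax lam hlam
    have hsymm := hB.symm lam δ
    simp only [map_sub, LinearMap.sub_apply] at hpos
    linarith
  rw [sub_eq_zero.1 hδlam]
  exact hmax μ hμ

/-- The height `B 1`, the pairing with the sum of the fundamental weights, keeps `stableSpan e u`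
away from the weight `ν`; adding the single vector `v` to it gives everything. -/
theorem stableSpan_raise_eq_iSup_ne (h : IsSimpleWeightModule a t e f Wt) (ha : ∀ i, a i i = 2)
    (hB : IsRootForm a B) (hv : v ∈ Wt ν) (hv0 : v ≠ 0) (hf : ∀ k, f k v = 0) {u : V}
    (hu : u ∈ Wt (ν + simpleRoot a k)) (he : ∀ l, e l v ∈ stableSpan e u) :
    stableSpan e u = ⨆ μ ≠ ν, Wt μ := by
  have hheight : ∀ l, 0 < B 1 (simpleRoot a l) := fun l =>
    hB.apply_simpleRoot_pos (ha l) one_pos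
  have hle : stableSpan e u ≤ ⨆ μ ≠ ν, Wt μ :=
    calc
      stableSpan e u ≤ ⨆ μ ∈ {μ | B 1 ν < B 1 μ}, Wt μ := by
        refine stableSpan_le_biSup h.raise_mem (fun μ hμ l => ?_) ?_ hu
        · simp only [Set.mem_ofPred_eq, map_add] at hμ ⊢
          linarith [hheight l]
        · simp [hheight k]
      _ ≤ ⨆ μ ≠ ν, Wt μ := biSup_mono fun μ hμ hμν => absurd (hμν ▸ hμ) (lt_irrefl (B 1 ν))
  have htop : stableSpan e u ⊔ Submodule.span 𝕜 {v} = ⊤ := by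
    refine top_unique ?_
    rw [← h.stableSpan_raise_eq_top hv hv0 hf]
    refine stableSpan_le (Submodule.mem_sup_right (Submodule.mem_span_singleton_self v)) fun l =>
      sup_le (fun x hx => Submodule.mem_sup_left (stableSpan_le_comap l hx)) ?_
    rw [Submodule.span_singleton_le_iff_mem]
    exact Submodule.mem_sup_left (he l)
  have hdisj : Disjoint (⨆ μ ≠ ν, Wt μ) (Submodule.span 𝕜 {v}) :=
    ((h.indep ν).mono_left ((Submodule.span_singleton_le_iff_mem v _).2 hv)).symm
  exact eq_of_le_of_inf_le_of_le_sup hle (hdisj.eq_bot.trans_le bot_le) (htop ▸ le_top)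

variable {g : (ι → ℤ) ≃ₗ[ℤ] (ι → ℤ)} {π : Equiv.Perm ι}

theorem lower_eq_zero_of_lowest [FiniteDimensional 𝕜 V] (h : IsSimpleWeightModule a t e f Wt)
    (ha : ∀ i, a i i = 2) (hB : IsRootForm a B) (hv : v ∈ Wt lam) (hv0 : v ≠ 0)
    (he : ∀ k, e k v = 0) (hlam : 0 ≤ lam) (hinv : ∀ ν, B (g ν) (g ν) = B ν ν)
    (hπ : ∀ ν i, g ν (π i) = -ν i) (hx : x ∈ Wt (g lam)) (k : ι) : f k x = 0 := by
  by_contra hne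
  have hnonpos : g lam k ≤ 0 := by
    rw [← π.apply_symm_apply k, hπ]
    exact neg_nonpos.2 (hlam _)
  have hle := h.apply_self_le_of_weight ha hB hv hv0 he
    ((Submodule.ne_bot_iff _).2 ⟨_, h.lower_mem k _ hx, hne⟩)
  exact (hle.trans_eq (hinv lam).symm).not_gt (hB.apply_self_lt_sub_simpleRoot (ha k) hnonpos)

theorem raise_eq_zero_of_lowest [FiniteDimensional 𝕜 V] (h : IsSimpleWeightModule a t e f Wt)
    (ha : ∀ i, a i i = 2) (hB : IsRootForm a B) (hv : v ∈ Wt lam) (hv0 : v ≠ 0)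
    (he : ∀ k, e k v = 0) (hinv : ∀ ν, B (g ν) (g ν) = B ν ν) (hπ : ∀ ν i, g ν (π i) = -ν i)
    (hx : x ∈ Wt (g lam)) (hk : lam k = 0) : e (π k) x = 0 := by
  by_contra hne
  have hzero : g lam (π k) = 0 := by rw [hπ, hk, neg_zero]
  have hle := h.apply_self_le_of_weight ha hB hv hv0 he
    ((Submodule.ne_bot_iff _).2 ⟨_, h.raise_mem _ _ hx, hne⟩)
  exact (hle.trans_eq (hinv lam).symm).not_gt
    (hB.apply_self_lt_add_simpleRoot (ha _) hzero.ge)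

theorem stableSpan_raise_eq_iSup_ne_lowest [DecidableEq ι] [FiniteDimensional 𝕜 V]
    (h : IsSimpleWeightModule a t e f Wt) (ha : ∀ i, a i i = 2) (hB : IsRootForm a B) {j : ι}
    (hv : v ∈ Wt (Pi.single j 1)) (hv0 : v ≠ 0) (he : ∀ k, e k v = 0)
    (hinv : ∀ ν, B (g ν) (g ν) = B ν ν) (hπ : ∀ ν i, g ν (π i) = -ν i)
    (hlow : Wt (g (Pi.single j 1)) ≠ ⊥) {u : V}
    (hspan : Wt (g (Pi.single j 1) + simpleRoot a (π j)) = Submodule.span 𝕜 {u}) :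
    stableSpan e u = ⨆ μ ≠ g (Pi.single j 1), Wt μ := by
  obtain ⟨x, hx, hx0⟩ := (Submodule.ne_bot_iff _).1 hlow
  have hu : u ∈ Wt (g (Pi.single j 1) + simpleRoot a (π j)) :=
    hspan ▸ Submodule.mem_span_singleton_self u
  have hfx := h.lower_eq_zero_of_lowest ha hB hv hv0 he (Pi.single_nonneg.2 zero_le_one) hinv hπ hx
  refine h.stableSpan_raise_eq_iSup_ne ha hB hx hx0 hfx hu fun l => ?_
  obtain ⟨k, rfl⟩ := π.surjective l
  rcases eq_or_ne k j with rfl | hkj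
  · have hex : e (π k) x ∈ Submodule.span 𝕜 {u} := hspan ▸ h.raise_mem (π k) _ hx
    exact (Submodule.span_singleton_le_iff_mem u _).2 self_mem_stableSpan hex
  · rw [h.raise_eq_zero_of_lowest ha hB hv hv0 he hinv hπ hx (Pi.single_eq_of_ne hkj 1)]
    exact zero_mem _

end IsSimpleWeightModule

theorem not_isOfFinOrder_of_transcendental {R A : Type*} [CommRing R] [Nontrivial R] [Ring A]
    [Algebra R A] {x : A} (hx : Transcendental R x) : ¬ IsOfFinOrder x := fun hfin => by
  obtain ⟨m, hm, hxm⟩ := isOfFinOrder_iff_pow_eq_one.1 hfin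
  exact hx (IsIntegral.of_pow hm (hxm ▸ isIntegral_one)).isAlgebraic

section QuantisedEnvelopingAlgebra

variable {q : ℂ} {n : ℕ} {a : Fin n → Fin n → ℤ} {d : Fin n → ℕ}

theorem UqRels.of_injective {A B : Type} [Ring A] [Algebra ℂ A] [Ring B] [Algebra ℂ B]
    {φ : A →ₐ[ℂ] B} (hφ : Function.Injective φ) {E F : Fin n → A} {K : Fin n → Aˣ}
    (h : UqRels q a d B (fun i => φ (E i)) (fun i => φ (F i))
      (fun i => Units.map (φ : A →* B) (K i))) :
    UqRels q a d A E F K := by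
  obtain ⟨hKK, hKE, hKF, hEF, hE, hF⟩ := h
  refine ⟨fun i j => hφ ?_, fun i j => hφ ?_, fun i j => hφ ?_, fun i j => hφ ?_,
    fun i j hij => hφ ?_, fun i j hij => hφ ?_⟩
  · simpa using hKK i j
  · simpa using hKE i j
  · simpa using hKF i j
  · simpa [apply_ite φ] using hEF i j
  · simpa using hE i j hij
  · simpa using hF i j hij

variable {U : Type} [Ring U] [Algebra ℂ U] {E F : Fin n → U} {K : Fin n → Uˣ}

theorem subalgebra_eq_top_of_universal (hrel : UqRels q a d U E F K)
    (huniv : ∀ (B : Type) [Ring B] [Algebra ℂ B] (E' F' : Fin n → B) (K' : Fin n → Bˣ),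
      UqRels q a d B E' F' K' → ∃! φ : U →ₐ[ℂ] B,
        (∀ i, φ (E i) = E' i) ∧ (∀ i, φ (F i) = F' i) ∧ (∀ i, φ (K i : U) = (K' i : B)))
    {A : Subalgebra ℂ U} (hE : ∀ i, E i ∈ A) (hF : ∀ i, F i ∈ A) (hK : ∀ i, (K i : U) ∈ A)
    (hK' : ∀ i, (↑(K i)⁻¹ : U) ∈ A) : A = ⊤ := by
  let E' : Fin n → A := fun i => ⟨E i, hE i⟩
  let F' : Fin n → A := fun i => ⟨F i, hF i⟩
  let K' : Fin n → Aˣ := fun i =>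
    ⟨⟨K i, hK i⟩, ⟨↑(K i)⁻¹, hK' i⟩, Subtype.ext (K i).mul_inv, Subtype.ext (K i).inv_mul⟩
  have hK'_map : (fun i => Units.map (A.val : A →* U) (K' i)) = K := by
    ext i
    rfl
  have hrel' : UqRels q a d A E' F' K' :=
    .of_injective (φ := A.val) Subtype.val_injective (hK'_map.symm ▸ hrel)
  obtain ⟨φ, ⟨hφE, hφF, hφK⟩, -⟩ := huniv A E' F' K' hrel'
  have hid : A.val.comp φ = AlgHom.id ℂ U :=
    (huniv U E F K hrel).unique
      ⟨fun i => congrArg A.val (hφE i), fun i => congrArg A.val (hφF i),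
        fun i => congrArg A.val (hφK i)⟩
      ⟨fun _ => rfl, fun _ => rfl, fun _ => rfl⟩
  refine Algebra.eq_top_iff.2 fun u => ?_
  have hu : (φ u : U) = u := DFunLike.congr_fun hid u
  exact hu ▸ (φ u).2

variable {V : Type} [AddCommGroup V] [Module ℂ V] {ρ : U →ₐ[ℂ] Module.End ℂ V} {μ : Fin n → ℤ}
  {x : V}

theorem mem_wtSp :
    x ∈ wtSp q d K ρ μ ↔ ∀ i, ρ (K i : U) x = q ^ (μ i * (d i : ℤ)) • x := by
  simp [wtSp, Submodule.mem_iInf, sub_eq_zero]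

theorem inv_smul_of_mem_wtSp (hq : q ≠ 0) (hx : x ∈ wtSp q d K ρ μ) (i : Fin n) :
    ρ (↑(K i)⁻¹ : U) x = q ^ (-(μ i * (d i : ℤ))) • x := by
  have hKx := congrArg (ρ (↑(K i)⁻¹ : U)) (mem_wtSp.1 hx i)
  rw [← Module.End.mul_apply, ← map_mul, Units.inv_mul, map_one, Module.End.one_apply,
    map_smul] at hKx
  rw [zpow_neg, eq_inv_smul_iff₀ (zpow_ne_zero _ hq)]
  exact hKx.symm

theorem mem_wtSp_of_semiconj (hq : q ≠ 0) {X : U} {c ν : Fin n → ℤ}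
    (hX : ∀ i, (K i : U) * X = q ^ (c i) • (X * K i))
    (hν : ∀ i, ν i * d i = c i + μ i * d i) (hx : x ∈ wtSp q d K ρ μ) :
    ρ X x ∈ wtSp q d K ρ ν := by
  refine mem_wtSp.2 fun i => ?_
  rw [← Module.End.mul_apply, ← map_mul, hX, map_smul, map_mul, LinearMap.smul_apply,
    Module.End.mul_apply, mem_wtSp.1 hx, map_smul, smul_smul, ← zpow_add₀ hq, hν]

theorem iSupIndep_wtSp (hq : Function.Injective fun m : ℤ => q ^ m) (hd : ∀ i, 0 < d i)
    (hK : ∀ i j, (K i : U) * (K j : U) = (K j : U) * (K i : U)) :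
    iSupIndep (wtSp q d K ρ) := by
  have hindep := Module.End.independent_iInf_maxGenEigenspace_of_forall_mapsTo
    (fun i => ρ (K i : U)) fun i j c => Module.End.mapsTo_maxGenEigenspace_of_comm
      ((Commute.map (hK j i) ρ : Commute (ρ (K j : U)) (ρ (K i : U)))) c
  have hinj : Function.Injective fun (μ : Fin n → ℤ) i => q ^ (μ i * (d i : ℤ)) :=
    fun μ ν h => funext fun i =>
      mul_right_cancel₀ (Nat.cast_ne_zero.2 (hd i).ne') (hq (congrFun h i))
  refine (hindep.comp hinj).mono fun μ => iInf_mono fun i => ?_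
  intro x hx
  refine Module.End.mem_maxGenEigenspace _ _ _ |>.2 ⟨1, ?_⟩
  rwa [pow_one]

theorem isSimpleWeightModule_wtSp (hq0 : q ≠ 0) (hq : ¬ IsOfFinOrder q) (hd : ∀ i, 0 < d i)
    (hrel : UqRels q a d U E F K)
    (huniv : ∀ (B : Type) [Ring B] [Algebra ℂ B] (E' F' : Fin n → B) (K' : Fin n → Bˣ),
      UqRels q a d B E' F' K' → ∃! φ : U →ₐ[ℂ] B,
        (∀ i, φ (E i) = E' i) ∧ (∀ i, φ (F i) = F' i) ∧ (∀ i, φ (K i : U) = (K' i : B)))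
    (hsimple : ∀ N : Submodule ℂ V, (∀ (u : U), ∀ v ∈ N, ρ u v ∈ N) → N = ⊥ ∨ N = ⊤) :
    IsSimpleWeightModule a (fun i => q ^ d i) (fun i => ρ (E i)) (fun i => ρ (F i))
      (wtSp q d K ρ) where
  zpow_injective k m m' h := by
    have hinj := zpow_injective_of_not_isOfFinOrder hq0 hq
    simp only [← zpow_natCast, ← zpow_mul] at h
    exact mul_left_cancel₀ (Nat.cast_ne_zero.2 (hd k).ne') (hinj h)
  indep := iSupIndep_wtSp (zpow_injective_of_not_isOfFinOrder hq0 hq) hd hrel.1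
  raise_mem k μ x hx := mem_wtSp_of_semiconj hq0 (fun i => hrel.2.1 i k)
    (fun i => by simp only [Pi.add_apply, simpleRoot]; ring) hx
  lower_mem k μ x hx := mem_wtSp_of_semiconj hq0 (fun i => hrel.2.2.1 i k)
    (fun i => by simp only [Pi.sub_apply, simpleRoot]; ring) hx
  commutator_self k μ x hx := by
    have hEF := congrArg (fun y => ρ y x) (hrel.2.2.2.1 k k)
    simp only [map_sub, map_mul, LinearMap.sub_apply, Module.End.mul_apply, if_true, map_smul,
      LinearMap.smul_apply, mem_wtSp.1 hx, inv_smul_of_mem_wtSp hq0 hx, ← sub_smul,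
      smul_smul] at hEF
    rw [hEF, qInt, div_eq_inv_mul]
    simp only [zpow_neg, zpow_mul', zpow_natCast]
  commute_of_ne k l hkl := by
    have hEF := congrArg ρ (hrel.2.2.2.1 k l)
    rw [if_neg hkl, map_zero, map_sub, map_mul, map_mul, sub_eq_zero] at hEF
    exact hEF
  eq_bot_or_eq_top N hE hF hN := by
    have hK : ∀ (y : U), (∀ μ, ∀ x ∈ wtSp q d K ρ μ, ∃ c : ℂ, ρ y x = c • x) →
        y ∈ stabilizerSubalgebra ρ N := fun y hy =>
      hN.trans (iSup_le fun μ x hx => by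
        obtain ⟨c, hc⟩ := hy μ x hx.2
        exact Submodule.mem_comap.2 (hc ▸ N.smul_mem c hx.1))
    have htop : stabilizerSubalgebra ρ N = ⊤ := subalgebra_eq_top_of_universal hrel huniv hE hF
      (fun i => hK _ fun μ x hx => ⟨_, mem_wtSp.1 hx i⟩)
      (fun i => hK _ fun μ x hx => ⟨_, inv_smul_of_mem_wtSp hq0 hx i⟩)
    exact hsimple N fun u => Algebra.eq_top_iff.1 htop u

end QuantisedEnvelopingAlgebra

theorem iSup_ne_eq_biSup_ne_bot {α β : Type*} [CompleteLattice β] (f : α → β) (c : α) :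
    ⨆ x ≠ c, f x = ⨆ x ∈ {x | f x ≠ ⊥ ∧ x ≠ c}, f x := by
  refine le_antisymm (iSup₂_le fun x hx => ?_) (biSup_mono fun x hx => hx.2)
  rcases eq_or_ne (f x) ⊥ with hbot | hbot
  · exact hbot.trans_le bot_le
  · exact le_biSup f (show x ∈ {x | f x ≠ ⊥ ∧ x ≠ c} from ⟨hbot, hx⟩)

/-- The action of the Weyl group on the weight lattice `ℤⁿ`, as an action by linear maps. -/
def weightAction {ι W : Type*} [Group W] (σ : W →* Multiplicative (AddAut (ι → ℤ))) :
    W →* ((ι → ℤ) ≃ₗ[ℤ] (ι → ℤ)) where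
  toFun w := (Multiplicative.toAdd (σ w)).toIntLinearEquiv
  map_one' := by rw [map_one]; rfl
  map_mul' w w' := by rw [map_mul]; rfl

theorem demazure_plus_w0si_general {q : ℂ} (hq0 : q ≠ 0) (hq : ¬ IsOfFinOrder q)
    {n : ℕ} {a : Fin n → Fin n → ℤ} {d : Fin n → ℕ} (ha_diag : ∀ i, a i i = 2)
    (hd_pos : ∀ i, 0 < d i)
    {U : Type} [Ring U] [Algebra ℂ U] {E F : Fin n → U} {K : Fin n → Uˣ}
    (hrel : UqRels q a d U E F K)
    (hUuniv : ∀ (B : Type) [Ring B] [Algebra ℂ B] (E' F' : Fin n → B) (K' : Fin n → Bˣ),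
      UqRels q a d B E' F' K' → ∃! φ : U →ₐ[ℂ] B,
        (∀ i, φ (E i) = E' i) ∧ (∀ i, φ (F i) = F' i) ∧ (∀ i, φ (K i : U) = (K' i : B)))
    {W : Type} [Group W] [Finite W] {σ : W →* Multiplicative (AddAut (Fin n → ℤ))}
    {s : Fin n → W} (hs : ∀ i (μ : Fin n → ℤ), σ (s i) μ = fun k => μ k - μ i * a k i)
    {w₀ : W} (hw₀ : ∀ μ : Fin n → ℤ, (∀ i, 0 ≤ μ i) → ∀ i, σ w₀ μ i ≤ 0)
    {V : Type} [AddCommGroup V] [Module ℂ V] [FiniteDimensional ℂ V]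
    {ρ : U →ₐ[ℂ] Module.End ℂ V}
    (hsimple : ∀ N : Submodule ℂ V, (∀ (u : U), ∀ v ∈ N, ρ u v ∈ N) → N = ⊥ ∨ N = ⊤)
    {j : Fin n} {v : V} (hv : v ∈ wtSp q d K ρ (Pi.single j 1)) (hv0 : v ≠ 0)
    (hEv : ∀ i, ρ (E i) v = 0)
    (hextremal : ∀ w : W, Module.finrank ℂ (wtSp q d K ρ (σ w (Pi.single j 1))) = 1)
    (i : Fin n) {u : V} (hu : u ∈ wtSp q d K ρ (σ (w₀ * s i) (Pi.single j 1))) (hu0 : u ≠ 0) :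
    (i ≠ j → Submodule.span ℂ {x | ∃ y ∈ Algebra.adjoin ℂ (Set.range E), x = ρ y u} = ⊤) ∧
    (i = j → Submodule.span ℂ {x | ∃ y ∈ Algebra.adjoin ℂ (Set.range E), x = ρ y u} =
      ⨆ μ ∈ {μ : Fin n → ℤ | wtSp q d K ρ μ ≠ ⊥ ∧ μ ≠ σ w₀ (Pi.single j 1)},
        wtSp q d K ρ μ) := by
  let r := weightAction σ
  have hrefl : ∀ i μ, r (s i) μ = μ - μ i • simpleRoot a i := hs
  change u ∈ wtSp q d K ρ (r (w₀ * s i) (Pi.single j 1)) at hu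
  obtain ⟨B, hB, hinv⟩ := exists_isRootForm_invariant ha_diag r s hrefl
  obtain ⟨π, hπ⟩ := exists_perm_apply_eq_neg (r.isOfFinOrder (isOfFinOrder_of_finite w₀)) hw₀
  have h := isSimpleWeightModule_wtSp hq0 hq hd_pos hrel hUuniv hsimple
  have hnorm := fun ν => hinv w₀ ν ν
  have hweight : r (w₀ * s i) (Pi.single j 1) =
      r w₀ (Pi.single j 1) + (Pi.single j 1 : Fin n → ℤ) i • simpleRoot a (π i) := by
    rw [map_mul, LinearEquiv.mul_apply, hrefl, map_sub, map_smul,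
      hB.map_simpleRoot ha_diag (hinv w₀) hπ, smul_neg, sub_neg_eq_add]
  rw [span_adjoin_range_eq_stableSpan]
  refine ⟨fun hij => ?_, ?_⟩
  · rw [hweight, Pi.single_eq_of_ne hij, zero_smul, add_zero] at hu
    exact h.stableSpan_raise_eq_top hu hu0
      (h.lower_eq_zero_of_lowest ha_diag hB hv hv0 hEv (Pi.single_nonneg.2 zero_le_one) hnorm hπ hu)
  · rintro rfl
    have hspan : wtSp q d K ρ (r (w₀ * s i) (Pi.single i 1)) = Submodule.span ℂ {u} :=
      eq_span_singleton_of_mem_of_finrank_eq_one (hextremal _) hu hu0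
    rw [hweight, Pi.single_eq_same, one_smul] at hspan
    rw [← iSup_ne_eq_biSup_ne_bot]
    have hlow : wtSp q d K ρ (r w₀ (Pi.single i 1)) ≠ ⊥ :=
      Submodule.one_le_finrank_iff.1 (hextremal w₀).ge
    exact h.stableSpan_raise_eq_iSup_ne_lowest ha_diag hB hv hv0 hEv hnorm hπ hlow hspan

theorem demazure_plus_w0si
    -- the deformation parameter: a transcendental complex number
    (q : ℂ) (hq : Transcendental ℚ q)
    -- Cartan data of the complex semisimple Lie algebra 𝔤 of rank n
    (n : ℕ) (hn : 0 < n) (a : Fin n → Fin n → ℤ) (d : Fin n → ℕ)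
    (ha_diag : ∀ i, a i i = 2) (ha_off : ∀ i j, i ≠ j → a i j ≤ 0)
    (ha_zero : ∀ i j, a i j = 0 ↔ a j i = 0)
    (hd_pos : ∀ i, 0 < d i)
    (ha_symm : ∀ i j, (d i : ℤ) * a i j = (d j : ℤ) * a j i)
    -- the quantised enveloping algebra U = U_q(𝔤): carries elements E i, F i and units K i
    -- satisfying the defining relations, and is universal for these relations
    (U : Type) [Ring U] [Algebra ℂ U]
    (E F : Fin n → U) (K : Fin n → Uˣ)
    (hrel : UqRels q a d U E F K)
    (hUuniv : ∀ (B : Type) [Ring B] [Algebra ℂ B] (E' F' : Fin n → B) (K' : Fin n → Bˣ),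
      UqRels q a d B E' F' K' → ∃! φ : U →ₐ[ℂ] B,
        (∀ i, φ (E i) = E' i) ∧ (∀ i, φ (F i) = F' i) ∧ (∀ i, φ (K i : U) = (K' i : B)))
    -- the Weyl group W, acting faithfully on the weight lattice P = ℤⁿ (coordinates taken in
    -- the basis of fundamental weights ϖ i), generated by the simple reflections s i, with
    -- longest element w₀ (characterised by: w₀ maps dominant weights to antidominant ones)
    (W : Type) [Group W] [Finite W] (σ : W →* Multiplicative (AddAut (Fin n → ℤ)))
    (hσinj : Function.Injective σ)
    (s : Fin n → W) (hsgen : Subgroup.closure (Set.range s) = ⊤)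
    (hs : ∀ i (μ : Fin n → ℤ), σ (s i) μ = fun k => μ k - μ i * a k i)
    (w₀ : W) (hw₀ : ∀ μ : Fin n → ℤ, (∀ i, 0 ≤ μ i) → ∀ i, σ w₀ μ i ≤ 0)
    -- the simple finite-dimensional modules V(λ) of highest weight λ = ∑ c i ϖ i ∈ P⁺
    (V : (Fin n → ℕ) → Type) [∀ c, AddCommGroup (V c)] [∀ c, Module ℂ (V c)]
    (ρ : ∀ c, U →ₐ[ℂ] Module.End ℂ (V c))
    (hfd : ∀ c, FiniteDimensional ℂ (V c))
    (hsimple : ∀ c (N : Submodule ℂ (V c)), (∀ (u : U), ∀ v ∈ N, ρ c u v ∈ N) → N = ⊥ ∨ N = ⊤)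
    (hhw : ∀ c, ∃ v : V c, v ≠ 0 ∧ v ∈ wtSp q d K (ρ c) (fun i => (c i : ℤ)) ∧
      ∀ i, ρ c (E i) v = 0)
    (hwtsum : ∀ c, (⨆ μ : Fin n → ℤ, wtSp q d K (ρ c) μ) = ⊤)
    (hextremal : ∀ c (w : W),
      Module.finrank ℂ (wtSp q d K (ρ c) (σ w (fun i => (c i : ℤ)))) = 1) :
    -- V⁺_{w₀ s_i}(ϖ_j) equals V(ϖ_j) when i ≠ j, and equals the (direct) sum of all
    -- weight spaces of V(ϖ_j) except the lowest one when i = j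
    ∀ i j : Fin n, ∀ u : V (Pi.single j 1),
      u ∈ wtSp q d K (ρ (Pi.single j 1)) (σ (w₀ * s i) (fun k => ((Pi.single j 1 : Fin n → ℕ) k : ℤ))) → u ≠ 0 →
      (i ≠ j → Submodule.span ℂ
          {x | ∃ y ∈ Algebra.adjoin ℂ (Set.range E), x = ρ (Pi.single j 1) y u} = ⊤) ∧
      (i = j → Submodule.span ℂ
          {x | ∃ y ∈ Algebra.adjoin ℂ (Set.range E), x = ρ (Pi.single j 1) y u} =
        ⨆ μ ∈ {μ : Fin n → ℤ | wtSp q d K (ρ (Pi.single j 1)) μ ≠ ⊥ ∧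
            μ ≠ σ w₀ (fun k => ((Pi.single j 1 : Fin n → ℕ) k : ℤ))},
          wtSp q d K (ρ (Pi.single j 1)) μ) := by
  intro i j u hu hu0
  obtain ⟨v, hv0, hv, hEv⟩ := hhw (Pi.single j 1)
  have hext := hextremal (Pi.single j 1)
  have := hfd (Pi.single j 1)
  have hcast : (fun k => ((Pi.single j 1 : Fin n → ℕ) k : ℤ)) = Pi.single j 1 := by
    ext k
    simp [Pi.single_apply]
  rw [hcast] at hu hv hext ⊢
  have hq0 : q ≠ 0 := fun h => hq (h ▸ isAlgebraic_zero)
  exact demazure_plus_w0si_general hq0 (not_isOfFinOrder_of_transcendental hq) ha_diag hd_pos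
    hrel hUuniv hs hw₀ (hsimple _) hv hv0 hEv hext i hu hu0
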